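/- Let G be a simple graph on Fin N containing a triangle (three mutually adjacent vertices). Then G admits no completely degenerate equilibrium of the identical Kuramoto system. -/

import Mathlib

open Real

open Classical in
/-- Adjacency indicator: `1` if `j` and `k` are adjacent in `G`, `0` otherwise. -/
noncomputable def adjInd {V : Type*} (G : SimpleGraph V) (j k : V) : ℝ :=
  if G.Adj j k then 1 else 0

/-- A completely degenerate equilibrium of the identical Kuramoto system on `G`. -/
def IsCDE {V : Type*} [Fintype V] (G : SimpleGraph V) (θ : V → ℝ) : Prop :=
  (∀ k, ∑ j, adjInd G j k * Real.sin (θ j - θ k) = 0) ∧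
  (∀ j k, G.Adj j k → Real.cos (θ j - θ k) = 0)

/-- a graph containing a triangle admits no completely degenerate
equilibrium. -/
theorem stmt9 {N : ℕ} (G : SimpleGraph (Fin N)) (i j k : Fin N)
    (hij : G.Adj i j) (hjk : G.Adj j k) (hik : G.Adj i k) :
    ¬ ∃ θ : Fin N → ℝ, IsCDE G θ := by
  rintro ⟨θ, -, h⟩
  have h1 := h i j hij
  have h2 := h j k hjk
  have h3 := h i k hik
  have e : θ i - θ k = (θ i - θ j) + (θ j - θ k) := by ring
  rw [e, Real.cos_add, h1, h2] at h3
  have p1 := Real.sin_sq_add_cos_sq (θ i - θ j)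
  have p2 := Real.sin_sq_add_cos_sq (θ j - θ k)
  rw [h1] at p1
  rw [h2] at p2
  have h4 : Real.sin (θ i - θ j) * Real.sin (θ j - θ k) = 0 := by linarith
  rcases mul_eq_zero.mp h4 with h5 | h5
  · rw [h5] at p1; norm_num at p1
  · rw [h5] at p2; norm_num at p2
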